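/- arXiv:2508.03273 — 4 statements merged into one kernel-verified Lean document; each statement's English description precedes it below -/
import Mathlib

section
/- Let ω be a weight function such that φ(t) = ω(e^t) is convex and such that log t = o(ω(t)) as t → ∞. Then for any 0 < r₀ < r₁, one has e^{(1/r₀) φ*(r₀ v)} = o( e^{(1/r₁) φ*(r₁ v)} ) as v → ∞; that is, e^{(1/r₀) φ*(r₀ v) − (1/r₁) φ*(r₁ v)} → 0 as v → ∞. -/
open MeasureTheory Filter

noncomputable section

/-- The Young conjugate `φ*(v) = sup_{u ≥ 0} (u v − φ(u))`, valued in `EReal`. -/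
def youngConj (φ : ℝ → ℝ) (v : ℝ) : EReal :=
  ⨆ u : Set.Ici (0 : ℝ), (((u : ℝ) * v - φ u : ℝ) : EReal)

theorem le_youngConj (φ : ℝ → ℝ) (v : ℝ) {u : ℝ} (hu : 0 ≤ u) :
    ((u * v - φ u : ℝ) : EReal) ≤ youngConj φ v :=
  le_iSup (fun u : Set.Ici (0 : ℝ) => (((u : ℝ) * v - φ u : ℝ) : EReal)) ⟨u, hu⟩

/-- If `φ ≥ 0` tends to infinity, the difference of the rescaled conjugates tends to `-∞`. -/
theorem tendsto_youngConj_sub_nhds_bot {φ : ℝ → ℝ} (hφ : ∀ u, 0 ≤ φ u)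
    (hφ_top : Tendsto φ atTop atTop) {r₀ r₁ : ℝ} (hr₀ : 0 < r₀) (hr : r₀ < r₁) :
    Tendsto (fun v : ℝ => ((1 / r₀ : ℝ) : EReal) * youngConj φ (r₀ * v)
      - ((1 / r₁ : ℝ) : EReal) * youngConj φ (r₁ * v)) atTop (nhds ⊥) := by
  have hr₁ : 0 < r₁ := hr₀.trans hr
  have hδ : 0 < 1 / r₀ - 1 / r₁ := sub_pos.2 (one_div_lt_one_div_of_lt hr₀ hr)
  rw [EReal.tendsto_nhds_bot_iff_real]
  intro a
  obtain ⟨U, hU0, hU⟩ : ∃ U : ℝ, 0 ≤ U ∧ ∀ u, U ≤ u → 1 - a ≤ φ u * (1 / r₀ - 1 / r₁) := by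
    obtain ⟨U, hU⟩ := eventually_atTop.1
      ((hφ_top.atTop_mul_const hδ).eventually_ge_atTop (1 - a))
    exact ⟨max U 0, le_max_right _ _, fun u hu => hU u ((le_max_left _ _).trans hu)⟩
  filter_upwards [eventually_ge_atTop 0,
    eventually_ge_atTop (1 - a + φ (U + 1) * (1 / r₁))] with v hv0 hv
  have hbound : ∀ u, 0 ≤ u → ((u * (r₁ * v) - φ u : ℝ) : EReal) ≤ youngConj φ (r₁ * v) :=
    fun u hu => le_youngConj φ (r₁ * v) hu
  generalize youngConj φ (r₁ * v) = Y at hbound ⊢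
  induction Y with
  | bot => exact absurd (hbound 0 le_rfl) (by simp)
  | top =>
    rw [EReal.coe_mul_top_of_pos (one_div_pos.2 hr₁), EReal.sub_top]
    exact EReal.bot_lt_coe a
  | coe y =>
    have hb : ∀ u, 0 ≤ u → u * v - φ u * (1 / r₁) ≤ 1 / r₁ * y := by
      intro u hu
      have h := mul_le_mul_of_nonneg_left (EReal.coe_le_coe_iff.1 (hbound u hu))
        (one_div_pos.2 hr₁).le
      have e : 1 / r₁ * (u * (r₁ * v) - φ u) = u * v - φ u * (1 / r₁) := by field_simp
      rwa [e] at h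
    have hle : youngConj φ (r₀ * v) ≤ ((r₀ * (a - 1 + 1 / r₁ * y) : ℝ) : EReal) := by
      refine iSup_le fun ⟨u, hu⟩ => EReal.coe_le_coe_iff.2 ?_
      have hu : 0 ≤ u := hu
      have key : u * v - φ u * (1 / r₀) ≤ a - 1 + 1 / r₁ * y := by
        rcases le_total U u with h | h
        · linarith [hU u h, hb u hu]
        · have h₁ := hb (U + 1) (by linarith)
          have h₂ := mul_le_mul_of_nonneg_right h hv0
          have h₃ := mul_nonneg (hφ u) (one_div_pos.2 hr₀).le
          linarith
      have e : u * (r₀ * v) - φ u = r₀ * (u * v - φ u * (1 / r₀)) := by field_simp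
      simpa only [e] using mul_le_mul_of_nonneg_left key hr₀.le
    generalize youngConj φ (r₀ * v) = X at hle ⊢
    induction X with
    | bot =>
      rw [EReal.coe_mul_bot_of_pos (one_div_pos.2 hr₀), EReal.bot_sub]
      exact EReal.bot_lt_coe a
    | top => exact absurd hle (EReal.coe_lt_top _).not_ge
    | coe x =>
      have h := mul_le_mul_of_nonneg_left (EReal.coe_le_coe_iff.1 hle) (one_div_pos.2 hr₀).le
      have e : 1 / r₀ * (r₀ * (a - 1 + 1 / r₁ * y)) = a - 1 + 1 / r₁ * y := by field_simp
      rw [e] at h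
      norm_cast
      linarith

theorem stmt4 (ω : ℝ → ℝ)
    (hω_nonneg : ∀ t : ℝ, 0 ≤ t → 0 ≤ ω t)
    (hω_mono : MonotoneOn ω (Set.Ici (0 : ℝ)))
    (hω_unbdd : ∀ M : ℝ, ∃ t : ℝ, 0 ≤ t ∧ M < ω t)
    (hφ : ConvexOn ℝ Set.univ (fun t : ℝ => ω (Real.exp t)))
    (hlog : (fun t : ℝ => Real.log t) =o[atTop] ω)
    (r₀ r₁ : ℝ) (hr₀ : 0 < r₀) (hr : r₀ < r₁) :
    Tendsto (fun v : ℝ =>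
        EReal.exp (((1 / r₀ : ℝ) : EReal) * youngConj (fun t => ω (Real.exp t)) (r₀ * v)
          - ((1 / r₁ : ℝ) : EReal) * youngConj (fun t => ω (Real.exp t)) (r₁ * v)))
      atTop (nhds (0 : ENNReal)) := by
  have hω_top : Tendsto ω atTop atTop := by
    refine tendsto_atTop.2 fun M => ?_
    obtain ⟨t, ht, hM⟩ := hω_unbdd M
    filter_upwards [eventually_ge_atTop t] with s hs
    exact hM.le.trans (hω_mono ht (ht.trans hs) hs)
  have h := tendsto_youngConj_sub_nhds_bot (φ := fun t => ω (Real.exp t))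
    (fun u => hω_nonneg _ (Real.exp_pos u).le) (hω_top.comp Real.tendsto_exp_atTop) hr₀ hr
  exact EReal.tendsto_exp_nhds_bot_nhds_zero.comp h

end
end

section
/- Let ω be a weight function such that φ(t) = ω(e^t) is convex. Let τ > 1, L ≥ 1 and C₀ ≥ 1 be such that ω(τ t) ≤ L ω(t) + log C₀ for all t ≥ 0. Then for every r > 0 and every n ∈ ℕ: τ^n e^{(L/r) φ*(r n / L)} ≤ C₀^{1/r} e^{(1/r) φ*(r n)}. -/
open MeasureTheory Filter

noncomputable section

theorem youngConj_ne_bot (φ : ℝ → ℝ) (v : ℝ) : youngConj φ v ≠ ⊥ :=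
  ne_bot_of_le_ne_bot (EReal.coe_ne_bot _) (le_youngConj φ v le_rfl)

/-- If `φ (u + a) ≤ L φ(u) + c` on `[0, ∞)`, a finite bound on `φ*(v)` gives one on `φ*(v / L)`. -/
theorem youngConj_div_le {φ : ℝ → ℝ} {a L c v y : ℝ} (ha : 0 ≤ a) (hL : 0 < L)
    (hshift : ∀ u, 0 ≤ u → φ (u + a) ≤ L * φ u + c) (hy : youngConj φ v ≤ y) :
    youngConj φ (v / L) ≤ (((y + c - a * v) / L : ℝ) : EReal) := by
  refine iSup_le fun ⟨u, hu⟩ => ?_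
  have hu : 0 ≤ u := hu
  have h : (u + a) * v - φ (u + a) ≤ y :=
    EReal.coe_le_coe_iff.1 ((le_youngConj φ v (add_nonneg hu ha)).trans hy)
  rw [EReal.coe_le_coe_iff, le_div_iff₀ hL, sub_mul, mul_assoc, div_mul_cancel₀ _ hL.ne']
  linarith [hshift u hu]

theorem stmt5 (ω : ℝ → ℝ)
    (hω_nonneg : ∀ t : ℝ, 0 ≤ t → 0 ≤ ω t)
    (hω_mono : MonotoneOn ω (Set.Ici (0 : ℝ)))
    (hω_unbdd : ∀ M : ℝ, ∃ t : ℝ, 0 ≤ t ∧ M < ω t)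
    (hφ : ConvexOn ℝ Set.univ (fun t : ℝ => ω (Real.exp t)))
    (τ L C₀ : ℝ) (hτ : 1 < τ) (hL : 1 ≤ L) (hC₀ : 1 ≤ C₀)
    (hmod : ∀ t : ℝ, 0 ≤ t → ω (τ * t) ≤ L * ω t + Real.log C₀) :
    ∀ r : ℝ, 0 < r → ∀ n : ℕ,
      ENNReal.ofReal τ ^ n *
          EReal.exp (((L / r : ℝ) : EReal) *
            youngConj (fun t => ω (Real.exp t)) (r * n / L))
        ≤ ENNReal.ofReal (C₀ ^ (1 / r)) *
          EReal.exp (((1 / r : ℝ) : EReal) *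
            youngConj (fun t => ω (Real.exp t)) (r * n)) := by
  intro r hr n
  have hL' : 0 < L := by linarith
  have hτ' : 0 < τ := by linarith
  have hC : 0 < C₀ := by linarith
  set φ : ℝ → ℝ := fun t => ω (Real.exp t) with hφ_def
  have hshift : ∀ u, 0 ≤ u → φ (u + Real.log τ) ≤ L * φ u + Real.log C₀ := fun u _ => by
    simpa only [hφ_def, Real.exp_add, Real.exp_log hτ', mul_comm] using
      hmod (Real.exp u) (Real.exp_pos u).le
  by_cases htop : youngConj φ (r * n) = ⊤
  · rw [htop, EReal.coe_mul_top_of_pos (by positivity), EReal.exp_top, ENNReal.mul_top]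
    · exact le_top
    · simpa using Real.rpow_pos_of_pos hC _
  have hy := EReal.coe_toReal htop (youngConj_ne_bot _ _)
  set y := (youngConj φ (r * n)).toReal
  have hle := youngConj_div_le (Real.log_nonneg hτ.le) hL' hshift hy.ge
  have hx := EReal.coe_toReal (ne_top_of_le_ne_top (EReal.coe_ne_top _) hle)
    (youngConj_ne_bot _ _)
  set x := (youngConj φ (r * n / L)).toReal
  rw [← hx, EReal.coe_le_coe_iff, le_div_iff₀ hL'] at hle
  rw [← hx, ← hy, ← EReal.coe_mul, ← EReal.coe_mul, EReal.exp_coe, EReal.exp_coe,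
    ← ENNReal.ofReal_pow hτ'.le, ← ENNReal.ofReal_mul (by positivity),
    ← ENNReal.ofReal_mul (by positivity)]
  apply ENNReal.ofReal_le_ofReal
  rw [Real.rpow_def_of_pos hC, ← Real.rpow_natCast, Real.rpow_def_of_pos hτ', ← Real.exp_add,
    ← Real.exp_add, Real.exp_le_exp]
  calc Real.log τ * n + L / r * x = (Real.log τ * (r * n) + x * L) / r := by field_simp
    _ ≤ (Real.log C₀ + y) / r := div_le_div_of_nonneg_right (by linarith) hr.le
    _ = Real.log C₀ * (1 / r) + 1 / r * y := by ring

end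
end

section
/- Let d ≥ 2 and let ω be a weight function such that φ(t) = ω(e^t) is convex and ω(t) = o(t²) as t → ∞. Let μ > 0, L ≥ 1 and C > 0 be such that for every t ≥ 0, inf_{s > 0} [ ((d−1)/(2d)) s^{2/(d−1)} + (1/(μ d)) ω(t^d / s) ] ≤ (L/μ) ω(t) + C. Then for every r with 0 < r < μ/L there exists C' > 0 such that e^{(1/r) φ*(r n)} ≤ C' (√(n!))^{1 − 1/d} ( e^{(1/μ) φ*(μ n)} )^{1/d} for all n ∈ ℕ. -/
open MeasureTheory Filter

noncomputable section

/-- The maximum of `x ↦ n log x - x` is controlled by `log n!`. -/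
theorem nat_mul_log_sub_le_log_factorial (n : ℕ) {x : ℝ} (hx : 0 < x) :
    n * Real.log x - x ≤ Real.log n.factorial := by
  have hfac : (0 : ℝ) < n.factorial := by exact_mod_cast n.factorial_pos
  have h := Real.log_le_log (by positivity) (Real.pow_div_factorial_le_exp x hx.le n)
  rw [Real.log_exp, Real.log_div (by positivity) (by positivity), Real.log_pow] at h
  linarith

/-- The bound on `n log y - ω y / μ` for all `y > 0`, including `y < 1`, which lies outside the
range of the supremum defining the Young conjugate. -/
theorem nat_mul_log_sub_le_of_youngConj_eq {ω : ℝ → ℝ} (hω : ∀ t : ℝ, 0 ≤ t → 0 ≤ ω t)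
    {μ : ℝ} (hμ : 0 < μ) (n : ℕ) {c : ℝ}
    (hc : youngConj (fun t => ω (Real.exp t)) (μ * n) = c) {y : ℝ} (hy : 0 < y) :
    n * Real.log y - ω y / μ ≤ (c + ω 1) / μ := by
  have bound : ∀ u : ℝ, 0 ≤ u → u * (μ * n) - ω (Real.exp u) ≤ c := fun u hu => by
    have h := le_youngConj (fun t => ω (Real.exp t)) (μ * n) hu
    rw [hc] at h
    exact_mod_cast h
  have hone := hω 1 zero_le_one
  rw [le_div_iff₀ hμ, sub_mul, div_mul_cancel₀ _ hμ.ne']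
  rcases le_total 0 (Real.log y) with h | h
  · have := bound _ h
    rw [Real.exp_log hy] at this
    linarith
  · have h0 := bound 0 le_rfl
    rw [Real.exp_zero] at h0
    have h1 : n * Real.log y * μ ≤ 0 :=
      mul_nonpos_of_nonpos_of_nonneg (mul_nonpos_of_nonneg_of_nonpos n.cast_nonneg h) hμ.le
    linarith [hω y hy.le]

theorem stmt16 (d : ℕ) (hd : 2 ≤ d) (ω : ℝ → ℝ)
    (hω_nonneg : ∀ t : ℝ, 0 ≤ t → 0 ≤ ω t)
    (hω_mono : MonotoneOn ω (Set.Ici (0 : ℝ)))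
    (hω_unbdd : ∀ M : ℝ, ∃ t : ℝ, 0 ≤ t ∧ M < ω t)
    (hφ : ConvexOn ℝ Set.univ (fun t : ℝ => ω (Real.exp t)))
    (ho : ω =o[atTop] (fun t : ℝ => t ^ 2))
    (μ L C : ℝ) (hμ : 0 < μ) (hL : 1 ≤ L) (hC : 0 < C)
    (hGI : ∀ t : ℝ, 0 ≤ t →
      (⨅ s : Set.Ioi (0 : ℝ),
          ((d - 1 : ℝ) / (2 * d)) * (s : ℝ) ^ (2 / ((d : ℝ) - 1)) +
            (1 / (μ * d)) * ω (t ^ (d : ℕ) / (s : ℝ)))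
        ≤ (L / μ) * ω t + C) :
    ∀ r : ℝ, 0 < r → r < μ / L →
      ∃ C' : ℝ, 0 < C' ∧
        ∀ n : ℕ,
          EReal.exp (((1 / r : ℝ) : EReal) *
              youngConj (fun t => ω (Real.exp t)) (r * n))
            ≤ ENNReal.ofReal (C' * Real.sqrt (n.factorial) ^ (1 - 1 / (d : ℝ))) *
              EReal.exp (((1 / μ : ℝ) : EReal) *
                youngConj (fun t => ω (Real.exp t)) (μ * n)) ^ ((1 : ℝ) / d) := by
  intro r hr hrL
  have hd1 : (0 : ℝ) < (d : ℝ) - 1 := by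
    have : (2 : ℝ) ≤ d := by exact_mod_cast hd
    linarith
  have hd0 : (0 : ℝ) < d := by linarith
  have hLr : L / μ ≤ 1 / r := by
    rw [lt_div_iff₀ (by linarith)] at hrL
    rw [div_le_div_iff₀ hμ hr]
    linarith
  refine ⟨Real.exp (C + 1 + ω 1 / (μ * d)), Real.exp_pos _, fun n => ?_⟩
  have hfac : (0 : ℝ) < n.factorial := by exact_mod_cast n.factorial_pos
  have hcoef : 0 < Real.exp (C + 1 + ω 1 / (μ * d)) *
      Real.sqrt n.factorial ^ (1 - 1 / (d : ℝ)) := by positivity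
  have hbot : youngConj (fun t => ω (Real.exp t)) (μ * n) ≠ ⊥ :=
    ((EReal.bot_lt_coe _).trans_le (le_youngConj _ _ le_rfl)).ne'
  by_cases htop : youngConj (fun t => ω (Real.exp t)) (μ * n) = ⊤
  · rw [htop, EReal.coe_mul_top_of_pos (by positivity), EReal.exp_top,
      ENNReal.top_rpow_of_pos (by positivity), ENNReal.mul_top (by simpa using hcoef)]
    exact le_top
  obtain ⟨c, hc⟩ : ∃ c : ℝ, youngConj (fun t => ω (Real.exp t)) (μ * n) = c :=
    ⟨_, (EReal.coe_toReal htop hbot).symm⟩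
  set B : ℝ := C + 1 + (d - 1) / (2 * d) * Real.log n.factorial + (c + ω 1) / μ / d with hB
  have key : ∀ u : ℝ, u * n - ω (Real.exp u) / r ≤ B := by
    intro u
    obtain ⟨⟨s, hs⟩, hlt⟩ := exists_lt_of_ciInf_lt
      ((hGI (Real.exp u) (Real.exp_pos u).le).trans_lt (lt_add_one _))
    have hs : 0 < s := hs
    simp only at hlt
    have hy : 0 < Real.exp u ^ d / s := by positivity
    have hlogy : Real.log (Real.exp u ^ d / s) = d * u - Real.log s := by
      rw [Real.log_div (by positivity) hs.ne', Real.log_pow, Real.log_exp]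
    have hyc := nat_mul_log_sub_le_of_youngConj_eq hω_nonneg hμ n hc hy
    have hx := nat_mul_log_sub_le_log_factorial n
      (Real.rpow_pos_of_pos hs (2 / ((d : ℝ) - 1)))
    rw [Real.log_rpow hs] at hx
    rw [hlogy] at hyc
    have hx' := mul_le_mul_of_nonneg_left hx
      (show (0 : ℝ) ≤ (d - 1) / (2 * d) by positivity)
    have hyc' := div_le_div_of_nonneg_right hyc hd0.le
    have hωu : L / μ * ω (Real.exp u) ≤ 1 / r * ω (Real.exp u) :=
      mul_le_mul_of_nonneg_right hLr (hω_nonneg _ (Real.exp_pos u).le)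
    have e1 : ((d : ℝ) - 1) / (2 * d) * (n * (2 / ((d : ℝ) - 1) * Real.log s) -
        s ^ (2 / ((d : ℝ) - 1))) =
        n * Real.log s / d - (d - 1) / (2 * d) * s ^ (2 / ((d : ℝ) - 1)) := by
      field_simp
    have e2 : (n * (d * u - Real.log s) - ω (Real.exp u ^ d / s) / μ) / d =
        u * n - n * Real.log s / d - 1 / (μ * d) * ω (Real.exp u ^ d / s) := by
      field_simp
    have e3 : 1 / r * ω (Real.exp u) = ω (Real.exp u) / r := by ring
    rw [e1] at hx'
    rw [e2] at hyc'
    linarith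
  have hsup : youngConj (fun t => ω (Real.exp t)) (r * n) ≤ ((r * B : ℝ) : EReal) := by
    refine iSup_le fun u => EReal.coe_le_coe_iff.2 ?_
    have h := mul_le_mul_of_nonneg_left (key u) hr.le
    rw [mul_sub, mul_div_cancel₀ _ hr.ne'] at h
    linarith
  have hlhs : ((1 / r : ℝ) : EReal) * youngConj (fun t => ω (Real.exp t)) (r * n) ≤ (B : EReal) := by
    refine (mul_le_mul_of_nonneg_left hsup (by exact_mod_cast (by positivity))).trans_eq ?_
    rw [← EReal.coe_mul]
    congr 1
    field_simp
  refine (EReal.exp_monotone hlhs).trans_eq ?_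
  rw [hc, ← EReal.coe_mul, EReal.exp_coe, EReal.exp_coe,
    ENNReal.ofReal_rpow_of_pos (Real.exp_pos _), ← ENNReal.ofReal_mul hcoef.le]
  congr 1
  rw [← Real.exp_mul, Real.rpow_def_of_pos (by positivity), Real.log_sqrt hfac.le,
    ← Real.exp_add, ← Real.exp_add, hB]
  congr 1
  field_simp
  ring

end
end

section
/- Let d ≥ 2 and let ω be a weight function such that φ(t) = ω(e^t) is convex, ω(t) = o(t²) as t → ∞, and there exist L₀ ≥ 1, C₀ > 0 with ω(t+s) ≤ L₀ (ω(t) + ω(s)) + C₀ for all t, s ≥ 0. Suppose there exists σ ∈ (1, d) such that ω(t) = o( t^{2(d−σ)/(d−1)} ) and ω(t) = o( ω(t^σ) ) as t → ∞. Then ω does not satisfy Gaussian interpolation of dimension d; that is, for every L > 0 and every C > 0 there exists t ≥ 0 such that for all σ' ∈ (1, d): t^{2(d−σ')/(d−1)} + ω(t^{σ'}) > L ω(t) + C. -/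
open MeasureTheory Filter

noncomputable section

theorem stmt17 (d : ℕ) (hd : 2 ≤ d) (ω : ℝ → ℝ)
    (hω_nonneg : ∀ t : ℝ, 0 ≤ t → 0 ≤ ω t)
    (hω_mono : MonotoneOn ω (Set.Ici (0 : ℝ)))
    (hω_unbdd : ∀ M : ℝ, ∃ t : ℝ, 0 ≤ t ∧ M < ω t)
    (hφ : ConvexOn ℝ Set.univ (fun t : ℝ => ω (Real.exp t)))
    (ho : ω =o[atTop] (fun t : ℝ => t ^ 2))
    (L₀ C₀ : ℝ) (hL₀ : 1 ≤ L₀) (hC₀ : 0 < C₀)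
    (hadd : ∀ t s : ℝ, 0 ≤ t → 0 ≤ s → ω (t + s) ≤ L₀ * (ω t + ω s) + C₀)
    (σ : ℝ) (hσ : σ ∈ Set.Ioo (1 : ℝ) (d : ℝ))
    (ho₁ : ω =o[atTop] (fun t : ℝ => t ^ (2 * ((d : ℝ) - σ) / ((d : ℝ) - 1))))
    (ho₂ : ω =o[atTop] (fun t : ℝ => ω (t ^ σ))) :
    ∀ L : ℝ, 0 < L → ∀ C : ℝ, 0 < C →
      ∃ t : ℝ, 0 ≤ t ∧ ∀ σ' ∈ Set.Ioo (1 : ℝ) (d : ℝ),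
        L * ω t + C < t ^ (2 * ((d : ℝ) - σ') / ((d : ℝ) - 1)) + ω (t ^ σ') := by
  intro L hL C _
  obtain ⟨hσ1, hσd⟩ := hσ
  have hd1 : (0 : ℝ) < (d : ℝ) - 1 := by linarith
  obtain ⟨T, hT, hCT⟩ := hω_unbdd C
  have hc : 0 < (L + 1)⁻¹ := by positivity
  obtain ⟨t, h₁, h₂, htT, ht1⟩ := ((ho₁.bound hc).and ((ho₂.bound hc).and
    ((eventually_ge_atTop T).and (eventually_ge_atTop 1)))).exists
  have ht0 : 0 ≤ t := zero_le_one.trans ht1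
  have hCt : C < ω t := hCT.trans_le (hω_mono hT ht0 htT)
  rw [Real.norm_of_nonneg (hω_nonneg t ht0), Real.norm_of_nonneg (by positivity),
    le_inv_mul_iff₀ (by positivity)] at h₁
  rw [Real.norm_of_nonneg (hω_nonneg t ht0),
    Real.norm_of_nonneg (hω_nonneg _ (by positivity)), le_inv_mul_iff₀ (by positivity)] at h₂
  refine ⟨t, ht0, fun σ' _ => ?_⟩
  rcases le_total σ' σ with h | h
  · have hpow : t ^ (2 * ((d : ℝ) - σ) / ((d : ℝ) - 1)) ≤
        t ^ (2 * ((d : ℝ) - σ') / ((d : ℝ) - 1)) :=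
      Real.rpow_le_rpow_of_exponent_le ht1 (by gcongr)
    have hnonneg : 0 ≤ ω (t ^ σ') := hω_nonneg _ (by positivity)
    linarith
  · have hmono : ω (t ^ σ) ≤ ω (t ^ σ') :=
      hω_mono (Real.rpow_nonneg ht0 σ) (Real.rpow_nonneg ht0 σ')
        (Real.rpow_le_rpow_of_exponent_le ht1 h)
    have hnonneg : 0 ≤ t ^ (2 * ((d : ℝ) - σ') / ((d : ℝ) - 1)) := by positivity
    linarith

end
end
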